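/- arXiv:hep-th/0204230 — 2 statements merged into one kernel-verified Lean document; each statement's English description precedes it below -/
import Mathlib

section
/- Let H be a complex Hilbert space, R a von Neumann algebra acting on H, and Ω ∈ H a vector that is cyclic for the commutant R′. Let (U_k)_{k∈ℕ} be a sequence of pairwise commuting unitary operators belonging to R such that ∑_k ‖U_kΩ − Ω‖ < ∞. Then for every ξ ∈ H the sequence of vectors (U_1 U_2 ⋯ U_n ξ)_n converges in H, and the operator U defined by Uξ = lim_n U_1⋯U_n ξ is unitary (i.e., the partial products converge in the strong operator topology to a unitary operator). -/
/-!
Write `Pₙ = U₀ ⋯ Uₙ₋₁`. Since `Pₙ` is a contraction, `‖Pₙ₊₁ ξ - Pₙ ξ‖ ≤ ‖Uₙ ξ - ξ‖`, so `Pₙ ξ` is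
Cauchy whenever `∑ ‖Uₖ ξ - ξ‖ < ∞`. The vectors `ξ` with this property form a subspace, stable under
every bounded operator commuting with all the `Uₖ`. As it contains `Ω`, it contains `T Ω` for all
`T ∈ R′`, so it is dense, and by equicontinuity `Pₙ` converges strongly to some `V`.

A strong limit of unitaries is isometric but need not be surjective. Here
`‖Uₖ* ξ - ξ‖ = ‖Uₖ ξ - ξ‖`, so the same argument applies to the operators `Uₖ*`, whose partial
products are `Pₙ*` because the `Uₖ` commute. Passing to the limit in `Pₙ Pₙ* = 1` gives `V` a right
inverse.
-/

open Filter Topology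

section Equicontinuous

variable {ι X α : Type*} [TopologicalSpace X] [UniformSpace α] {l : Filter ι} {F : ι → X → α}
  {x : X}

lemma cauchy_map_of_equicontinuousAt_of_mem_closure {s : Set X} (hF : EquicontinuousAt F x)
    (hx : x ∈ closure s) (hs : ∀ y ∈ s, Cauchy (map (F · y) l)) : Cauchy (map (F · x) l) := by
  obtain ⟨z, hz⟩ := closure_nonempty_iff.1 ⟨x, hx⟩
  have h_neBot : l.NeBot := (map_neBot_iff _).1 (hs z hz).1
  refine cauchy_map_iff.2 ⟨h_neBot, fun u hu => ?_⟩
  obtain ⟨v, hv, hv_symm, hvu⟩ := comp_comp_symm_mem_uniformity_sets hu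
  obtain ⟨y, hy, hys⟩ := mem_closure_iff_nhds.1 hx _ (hF v hv)
  have h_close : ∀ᶠ p in l ×ˢ l, (F p.1 y, F p.2 y) ∈ v := (cauchy_map_iff.1 (hs y hys)).2 hv
  refine mem_map.2 (h_close.mono fun p hp => ?_)
  exact hvu ⟨F p.2 y, ⟨F p.1 y, hy p.1, hp⟩, hv_symm.symm _ _ (hy p.2)⟩

lemma tendsto_apply_of_equicontinuousAt {y : α} {u : ι → X} (hF : EquicontinuousAt F x)
    (hFx : Tendsto (F · x) l (𝓝 y)) (hu : Tendsto u l (𝓝 x)) :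
    Tendsto (fun i => F i (u i)) l (𝓝 y) := by
  rw [Uniform.tendsto_nhds_right] at hFx ⊢
  refine hFx.uniformity_trans fun v hv => ?_
  exact mem_map.2 ((hu.eventually (hF v hv)).mono fun i hi => hi i)

end Equicontinuous

section SummableDisplacement

variable {ι 𝕜 E : Type*} [NontriviallyNormedField 𝕜] [SeminormedAddCommGroup E] [NormedSpace 𝕜 E]

/-- The subspace of vectors `x` whose displacements `U i x - x` under a family `U` of operators are
absolutely summable; on these vectors the partial products of a sequence of contractions
converge. -/
def summableDisplacement (U : ι → E →L[𝕜] E) : Submodule 𝕜 E where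
  carrier := {x | Summable fun i => ‖U i x - x‖}
  zero_mem' := by simp [summable_zero]
  add_mem' {x y} hx hy := by
    refine (hx.add hy).of_nonneg_of_le (fun _ => norm_nonneg _) fun i => ?_
    rw [map_add, add_sub_add_comm]
    exact norm_add_le _ _
  smul_mem' c x hx := (hx.mul_left ‖c‖).congr fun i => by rw [map_smul, ← smul_sub, norm_smul]

variable {U : ι → E →L[𝕜] E}

lemma mem_summableDisplacement {x : E} :
    x ∈ summableDisplacement U ↔ Summable fun i => ‖U i x - x‖ :=
  Iff.rfl

lemma apply_mem_summableDisplacement_of_commute {T : E →L[𝕜] E} (hT : ∀ i, Commute (U i) T)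
    {x : E} (hx : x ∈ summableDisplacement U) : T x ∈ summableDisplacement U := by
  refine (hx.mul_left ‖T‖).of_nonneg_of_le (fun _ => norm_nonneg _) fun i => ?_
  have hTx : U i (T x) = T (U i x) := DFunLike.congr_fun (hT i).eq x
  rw [hTx, ← map_sub]
  exact T.le_opNorm _

lemma dense_summableDisplacement_of_commute {S : Set (E →L[𝕜] E)}
    (hS : ∀ T ∈ S, ∀ i, Commute (U i) T) {x : E} (hx : x ∈ summableDisplacement U)
    (hdense : Dense (Submodule.span 𝕜 ((fun T : E →L[𝕜] E => T x) '' S) : Set E)) :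
    Dense (summableDisplacement U : Set E) := by
  refine hdense.mono (Submodule.span_le.2 ?_)
  rintro _ ⟨T, hT, rfl⟩
  exact apply_mem_summableDisplacement_of_commute (hS T hT) hx

end SummableDisplacement

section Contractions

lemma equicontinuous_of_opNorm_le_one {ι 𝕜 E F : Type*} [NontriviallyNormedField 𝕜]
    [SeminormedAddCommGroup E] [NormedSpace 𝕜 E] [SeminormedAddCommGroup F] [NormedSpace 𝕜 F]
    {P : ι → E →L[𝕜] F} (hP : ∀ i, ‖P i‖ ≤ 1) : Equicontinuous fun i => ⇑(P i) :=
  (LipschitzWith.uniformEquicontinuous _ 1 fun i => (P i).lipschitz.weaken (hP i)).equicontinuous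

variable {𝕜 E : Type*} [NontriviallyNormedField 𝕜]

lemma opNorm_list_prod_le_one [SeminormedAddCommGroup E] [NormedSpace 𝕜 E] {L : List (E →L[𝕜] E)}
    (hL : ∀ T ∈ L, ‖T‖ ≤ 1) : ‖L.prod‖ ≤ 1 :=
  L.prod_induction (‖·‖ ≤ 1)
    (fun S T hS hT => (S.opNorm_comp_le T).trans (mul_le_one₀ hS (norm_nonneg T) hT))
    ContinuousLinearMap.norm_id_le hL

lemma opNorm_prod_range_le_one [SeminormedAddCommGroup E] [NormedSpace 𝕜 E] {U : ℕ → E →L[𝕜] E}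
    (hU : ∀ k, ‖U k‖ ≤ 1) (n : ℕ) : ‖((List.range n).map U).prod‖ ≤ 1 :=
  opNorm_list_prod_le_one (List.forall_mem_map.2 fun k _ => hU k)

lemma cauchySeq_prod_apply_of_mem_summableDisplacement [SeminormedAddCommGroup E]
    [NormedSpace 𝕜 E] {U : ℕ → E →L[𝕜] E} (hU : ∀ k, ‖U k‖ ≤ 1) {x : E}
    (hx : x ∈ summableDisplacement U) :
    CauchySeq fun n => ((List.range n).map U).prod x := by
  refine cauchySeq_of_dist_le_of_summable _ (fun n => ?_) (mem_summableDisplacement.1 hx)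
  rw [List.prod_range_succ, mul_apply_eq_comp, dist_comm, dist_eq_norm, ← map_sub]
  simpa only [one_mul] using
    ContinuousLinearMap.le_of_opNorm_le _ (opNorm_prod_range_le_one hU n) (U n x - x)

lemma exists_tendsto_prod_apply_of_dense_summableDisplacement [NormedAddCommGroup E]
    [NormedSpace 𝕜 E] [CompleteSpace E] {U : ℕ → E →L[𝕜] E} (hU : ∀ k, ‖U k‖ ≤ 1)
    (hdense : Dense (summableDisplacement U : Set E)) :
    ∃ V : E →L[𝕜] E,
      ∀ x, Tendsto (fun n => ((List.range n).map U).prod x) atTop (𝓝 (V x)) := by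
  have h_equi := equicontinuous_of_opNorm_le_one (opNorm_prod_range_le_one hU)
  have h_cauchy (x : E) : CauchySeq fun n => ((List.range n).map U).prod x :=
    cauchy_map_of_equicontinuousAt_of_mem_closure (h_equi x) (hdense x) fun _ =>
      cauchySeq_prod_apply_of_mem_summableDisplacement hU
  choose f hf using fun x => cauchySeq_tendsto_of_complete (h_cauchy x)
  exact ⟨continuousLinearMapOfTendsto _ (tendsto_pi_nhds.2 hf), hf⟩

end Contractions

lemma star_list_prod_of_pairwise_commute {M : Type*} [Monoid M] [StarMul M] {L : List M}
    (hL : L.Pairwise Commute) : star L.prod = (L.map star).prod := by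
  induction hL with
  | nil => simp
  | cons ha _ ih =>
    rw [List.prod_cons, (Commute.list_prod_right _ _ ha).eq, star_mul, ih, List.map_cons,
      List.prod_cons]

section Unitary

variable {𝕜 H : Type*} [RCLike 𝕜] [NormedAddCommGroup H] [InnerProductSpace 𝕜 H] [CompleteSpace H]

lemma opNorm_le_one_of_mem_unitary {u : H →L[𝕜] H} (hu : u ∈ unitary (H →L[𝕜] H)) : ‖u‖ ≤ 1 :=
  u.opNorm_le_bound zero_le_one fun x => by rw [u.norm_map_of_mem_unitary hu, one_mul]

lemma norm_star_apply_sub_of_mem_unitary {u : H →L[𝕜] H} (hu : u ∈ unitary (H →L[𝕜] H)) (x : H) :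
    ‖star u x - x‖ = ‖u x - x‖ := by
  have hux : u (star u x) = x := DFunLike.congr_fun (Unitary.mul_star_self_of_mem hu) x
  rw [← u.norm_map_of_mem_unitary hu (star u x - x), map_sub, hux, norm_sub_rev]

lemma summableDisplacement_star {ι : Type*} {U : ι → H →L[𝕜] H}
    (hU : ∀ i, U i ∈ unitary (H →L[𝕜] H)) :
    summableDisplacement (fun i => star (U i)) = summableDisplacement U := by
  ext x
  simp only [mem_summableDisplacement, norm_star_apply_sub_of_mem_unitary (hU _)]

lemma mem_unitary_of_norm_map_of_mul_eq_one {V W : H →L[𝕜] H} (hV : ∀ x, ‖V x‖ = ‖x‖)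
    (hVW : V * W = 1) : V ∈ unitary (H →L[𝕜] H) := by
  have h_star_mul : star V * V = 1 := V.norm_map_iff_adjoint_comp_self.1 hV
  have h_star : star V = W := left_inv_eq_right_inv h_star_mul hVW
  exact ⟨h_star_mul, h_star ▸ hVW⟩

lemma mem_unitary_of_tendsto_apply {ι : Type*} {l : Filter ι} [l.NeBot] {P : ι → H →L[𝕜] H}
    {V W : H →L[𝕜] H} (hP : ∀ i, P i ∈ unitary (H →L[𝕜] H))
    (hV : ∀ x, Tendsto (fun i => P i x) l (𝓝 (V x)))
    (hW : ∀ x, Tendsto (fun i => star (P i) x) l (𝓝 (W x))) :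
    V ∈ unitary (H →L[𝕜] H) := by
  have h_norm (x : H) : ‖V x‖ = ‖x‖ :=
    tendsto_nhds_unique (hV x).norm <| tendsto_const_nhds.congr fun i =>
      ((P i).norm_map_of_mem_unitary (hP i) x).symm
  refine mem_unitary_of_norm_map_of_mul_eq_one h_norm (W := W) ?_
  ext x
  have h_equi := equicontinuous_of_opNorm_le_one fun i => opNorm_le_one_of_mem_unitary (hP i)
  have h_lim : Tendsto (fun i => P i (star (P i) x)) l (𝓝 (V (W x))) :=
    tendsto_apply_of_equicontinuousAt (h_equi (W x)) (hV (W x)) (hW x)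
  exact tendsto_nhds_unique h_lim <| tendsto_const_nhds.congr fun i =>
    (DFunLike.congr_fun (Unitary.mul_star_self_of_mem (hP i)) x).symm

theorem infinite_product_of_unitaries_converges_general {U : ℕ → H →L[𝕜] H}
    (hU : ∀ k, U k ∈ unitary (H →L[𝕜] H)) (hcomm : ∀ j k, Commute (U j) (U k))
    (hdense : Dense (summableDisplacement U : Set H)) :
    ∃ V : H →L[𝕜] H, V ∈ unitary (H →L[𝕜] H) ∧
      ∀ ξ : H, Tendsto (fun n => ((List.range n).map U).prod ξ) atTop (𝓝 (V ξ)) := by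
  have h_prod_unitary (n : ℕ) : ((List.range n).map U).prod ∈ unitary (H →L[𝕜] H) :=
    list_prod_mem (List.forall_mem_map.2 fun k _ => hU k)
  have h_star_prod (n : ℕ) :
      star ((List.range n).map U).prod = ((List.range n).map fun k => star (U k)).prod := by
    rw [star_list_prod_of_pairwise_commute (List.pairwise_map.2 (List.pairwise_of_forall hcomm)),
      List.map_map]
    rfl
  obtain ⟨V, hV⟩ := exists_tendsto_prod_apply_of_dense_summableDisplacement
    (fun k => opNorm_le_one_of_mem_unitary (hU k)) hdense
  obtain ⟨W, hW⟩ := exists_tendsto_prod_apply_of_dense_summableDisplacement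
    (fun k => opNorm_le_one_of_mem_unitary (Unitary.star_mem (hU k)))
    (by rwa [summableDisplacement_star hU])
  simp only [← h_star_prod] at hW
  exact ⟨V, mem_unitary_of_tendsto_apply h_prod_unitary hV hW, hV⟩

end Unitary

/-- Let `H` be a complex Hilbert space, `R` a von Neumann algebra acting
on `H`, and `Ω ∈ H` a vector cyclic for the commutant `R′`.  Let `(U k)` be a sequence of
pairwise commuting unitary operators belonging to `R` with `∑ k, ‖U k Ω − Ω‖ < ∞`.  Then
the partial products `U 0 ⋯ U (n-1)` converge in the strong operator topology to a
unitary operator. -/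
theorem infinite_product_of_unitaries_converges
    {H : Type*} [NormedAddCommGroup H] [InnerProductSpace ℂ H] [CompleteSpace H]
    (R : VonNeumannAlgebra H) (Ω : H)
    (hcyclic : Dense
      (↑(Submodule.span ℂ ((fun T : H →L[ℂ] H => T Ω) '' (R.commutant : Set (H →L[ℂ] H)))) :
        Set H))
    (U : ℕ → H →L[ℂ] H)
    (hUR : ∀ k, U k ∈ R)
    (hUunit : ∀ k, U k ∈ unitary (H →L[ℂ] H))
    (hUcomm : ∀ j k, U j * U k = U k * U j)
    (hsum : Summable fun k => ‖U k Ω - Ω‖) :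
    ∃ V : H →L[ℂ] H, V ∈ unitary (H →L[ℂ] H) ∧
      ∀ ξ : H, Tendsto (fun n => ((List.range n).map U).prod ξ) atTop (𝓝 (V ξ)) :=
  infinite_product_of_unitaries_converges_general hUunit hUcomm <|
    dense_summableDisplacement_of_commute
      (fun _ hT k => VonNeumannAlgebra.mem_commutant_iff.1 hT (U k) (hUR k)) hsum hcyclic
end

section
/- Let m > 0 and let Ω_m⁺ be the Lorentz-invariant measure on the positive-energy mass-m hyperboloid in ℝ⁴ (the pushforward of (2ω_m(p))⁻¹ d³p under p ↦ (ω_m(p), p)). Let f, g : ℝ⁴ → ℝ be smooth compactly supported functions whose supports are spacelike separated, i.e., q(x − y) < 0 for all x in the support of f and all y in the support of g, where q(x) = x₀² − x₁² − x₂² − x₃². Then the integral ∫ conj(f̂(p)) ĝ(p) dΩ_m⁺(p) is a real number (its imaginary part vanishes), where f̂(p) = ∫_{ℝ⁴} f(x) e^{i(p₀x₀ − p₁x₁ − p₂x₂ − p₃x₃)} dx. -/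
/-!
After Fubini the integral is the double integral of `f x * g y` against the two-point function at
`y - x`, so it suffices that the latter is real at spacelike points. To make it converge, insert
the cutoff `exp (-ε |p|²)`. The reflection `p ↦ -p` in the spatial momentum turns twice the
imaginary part of the two-point function at `(t, z)` into the integral over `p` of
`exp (-ε |p|²) exp (-i p·z) sin (ω t) / ω`. Since `sin (ω t) / ω` is an entire function of
`ω² = |p|² + m²`, the contour may be shifted to `p - i λ z`, where `|Im ω|` is at most the length
`λ |z|` of the imaginary part of the momentum. Hence the integral is at most a multiple of
`ε ^ (-3/2) |t| exp (ε λ² |z|² - λ |z|² + λ |t| |z|)`. For `|t| < |z|` the best `λ` gives the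
factor `exp (-(|z| - |t|)² / (4 ε))`, which tends to zero as `ε → 0`, uniformly on compact sets of
spacelike points.
-/

open MeasureTheory

/-- The energy `ω_m(p) = √(|p|² + m²)`. -/
noncomputable def energyOf (m : ℝ) (p : Fin 3 → ℝ) : ℝ :=
  Real.sqrt ((∑ j : Fin 3, p j ^ 2) + m ^ 2)

/-- The Lorentz-invariant measure `Ω_m⁺` on the positive-energy mass-`m` hyperboloid in
`ℝ⁴`: the pushforward under `p ↦ (ω_m(p), p)` of the measure `(2ω_m(p))⁻¹ d³p` on `ℝ³`. -/
noncomputable def massShellMeasure (m : ℝ) : Measure (Fin 4 → ℝ) :=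
  Measure.map (fun p : Fin 3 → ℝ => Fin.cons (energyOf m p) p)
    (volume.withDensity fun p : Fin 3 → ℝ => ENNReal.ofReal ((2 * energyOf m p)⁻¹))

/-- The Minkowski quadratic form `q(x) = x₀² − x₁² − x₂² − x₃²`. -/
def minkowskiQ (x : Fin 4 → ℝ) : ℝ :=
  x 0 ^ 2 - x 1 ^ 2 - x 2 ^ 2 - x 3 ^ 2

/-- The Minkowski bilinear pairing `p·x = p₀x₀ − p₁x₁ − p₂x₂ − p₃x₃`. -/
def minkowskiPairing (p x : Fin 4 → ℝ) : ℝ :=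
  p 0 * x 0 - p 1 * x 1 - p 2 * x 2 - p 3 * x 3

/-- The (relativistic) Fourier transform `f̂(p) = ∫ f(x) e^{i p·x} dx` with respect to the
Minkowski pairing. -/
noncomputable def minkFourier (f : (Fin 4 → ℝ) → ℝ) (p : Fin 4 → ℝ) : ℂ :=
  ∫ x : Fin 4 → ℝ, (f x : ℂ) * Complex.exp (Complex.I * (minkowskiPairing p x : ℂ))

open Set Filter Complex
open scoped Topology InnerProductSpace

/-! ### The entire function `sin (t √w) / √w` -/

/-- The entire function `w ↦ sin (t √w) / √w`, which turns `sin (ω t) / ω` into an entire function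
of `ω²`. It is encoded by its power series, so that no branch of the square root is involved. -/
noncomputable def sincSqrt (t : ℝ) (w : ℂ) : ℂ :=
  ∑' k : ℕ, (-w) ^ k * (t : ℂ) ^ (2 * k + 1) / ((2 * k + 1).factorial : ℂ)

lemma sincSqrt_zero (t : ℝ) : sincSqrt t 0 = t := by
  rw [sincSqrt, tsum_eq_single 0 fun k hk => by simp [hk]]
  simp

lemma norm_sincSqrt_term_le (t : ℝ) {w : ℂ} {R : ℝ} (hw : ‖w‖ ≤ R) (k : ℕ) :
    ‖(-w) ^ k * (t : ℂ) ^ (2 * k + 1) / ((2 * k + 1).factorial : ℂ)‖ ≤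
      |t| * ((R * t ^ 2) ^ k / k.factorial) := by
  have hR : 0 ≤ R := (norm_nonneg w).trans hw
  have hfact : (k.factorial : ℝ) ≤ (2 * k + 1).factorial := by
    exact_mod_cast Nat.factorial_le (by omega)
  calc ‖(-w) ^ k * (t : ℂ) ^ (2 * k + 1) / ((2 * k + 1).factorial : ℂ)‖
      = |t| * ((‖w‖ * t ^ 2) ^ k / (2 * k + 1).factorial) := by
        simp only [norm_div, norm_mul, norm_pow, norm_neg, Complex.norm_real, Real.norm_eq_abs,
          Complex.norm_natCast, ← sq_abs t]
        ring
    _ ≤ |t| * ((R * t ^ 2) ^ k / k.factorial) := by gcongr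

lemma differentiable_sincSqrt (t : ℝ) : Differentiable ℂ (sincSqrt t) := by
  intro w
  have hball : DifferentiableOn ℂ (sincSqrt t) (Metric.ball 0 (‖w‖ + 1)) :=
    differentiableOn_tsum_of_summable_norm
      ((Real.summable_pow_div_factorial ((‖w‖ + 1) * t ^ 2)).mul_left |t|)
      (fun k => by fun_prop) Metric.isOpen_ball
      fun k v hv => norm_sincSqrt_term_le t (mem_ball_zero_iff.1 hv).le k
  exact hball.differentiableAt (Metric.isOpen_ball.mem_nhds (by simp))

lemma mul_sincSqrt_sq (t : ℝ) (a : ℂ) : a * sincSqrt t (a ^ 2) = sin (t * a) := by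
  rw [← (hasSum_sin (t * a)).tsum_eq, sincSqrt, ← tsum_mul_left]
  refine tsum_congr fun k => ?_
  rw [neg_pow (a ^ 2), ← pow_mul, mul_pow]
  ring

lemma norm_cos_le_exp_abs_im (z : ℂ) : ‖cos z‖ ≤ Real.exp |z.im| := by
  have hpos : ‖exp (z * I)‖ ≤ Real.exp |z.im| := by
    rw [norm_exp]; simp [neg_le_abs]
  have hneg : ‖exp (-z * I)‖ ≤ Real.exp |z.im| := by
    rw [norm_exp]; simp [le_abs_self]
  rw [cos, norm_div, norm_ofNat]
  linarith [norm_add_le (exp (z * I)) (exp (-z * I))]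

lemma norm_sin_le_norm_mul_exp_abs_im (z : ℂ) : ‖sin z‖ ≤ ‖z‖ * Real.exp |z.im| := by
  have hconvex : Convex ℝ (im ⁻¹' Icc (-|z.im|) |z.im|) :=
    (convex_Icc _ _).linear_preimage imLm
  have hmean := hconvex.norm_image_sub_le_of_norm_deriv_le (f := sin) (C := Real.exp |z.im|)
    (x := 0) (y := z) (fun w _ => differentiable_sin w)
    (fun w hw => by
      rw [Complex.deriv_sin]
      exact (norm_cos_le_exp_abs_im w).trans (Real.exp_le_exp.2 (abs_le.2 hw)))
    (by simp) (abs_le.1 le_rfl)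
  simpa [mul_comm] using hmean

lemma norm_sincSqrt_sq_le (t : ℝ) (a : ℂ) :
    ‖sincSqrt t (a ^ 2)‖ ≤ |t| * Real.exp (|t| * |a.im|) := by
  rcases eq_or_ne a 0 with rfl | ha
  · simp [sincSqrt_zero]
  · refine le_of_mul_le_mul_left ?_ (norm_pos_iff.2 ha)
    calc ‖a‖ * ‖sincSqrt t (a ^ 2)‖ = ‖sin (t * a)‖ := by rw [← norm_mul, mul_sincSqrt_sq]
      _ ≤ ‖(t : ℂ) * a‖ * Real.exp |((t : ℂ) * a).im| := norm_sin_le_norm_mul_exp_abs_im _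
      _ = ‖a‖ * (|t| * Real.exp (|t| * |a.im|)) := by
        rw [norm_mul, norm_real, Real.norm_eq_abs, im_ofReal_mul, abs_mul]; ring

/-! ### Shifting an integral into the complex domain -/

section ContourShift

lemma differentiableAt_integral_of_norm_le {α F : Type*} [MeasurableSpace α] {μ : Measure α}
    [NormedAddCommGroup F] [NormedSpace ℂ F] {f : ℂ → α → F} {s₀ : ℂ} {r : ℝ} {bound : α → ℝ}
    (hr : 0 < r) (hmeas : ∀ s, AEStronglyMeasurable (f s) μ)
    (hdiff : ∀ x, DifferentiableOn ℂ (f · x) (Metric.ball s₀ r)) (hbound : Integrable bound μ)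
    (hle : ∀ s ∈ Metric.ball s₀ r, ∀ x, ‖f s x‖ ≤ bound x) :
    DifferentiableAt ℂ (fun s => ∫ x, f s x ∂μ) s₀ := by
  have hball : ∀ s ∈ Metric.ball s₀ (r / 2), Metric.closedBall s (r / 2) ⊆ Metric.ball s₀ r :=
    fun s hs => Metric.closedBall_subset_ball' (by linarith [Metric.mem_ball.1 hs])
  have hasDeriv : ∀ x, ∀ s ∈ Metric.ball s₀ (r / 2), HasDerivAt (f · x) (deriv (f · x) s) s :=
    fun x s hs => ((hdiff x).differentiableAt
      (Metric.isOpen_ball.mem_nhds (Metric.ball_subset_ball (by linarith) hs))).hasDerivAt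
  -- Cauchy's estimate turns the bound on `f` into a bound on its derivative.
  have hderiv_le : ∀ x, ∀ s ∈ Metric.ball s₀ (r / 2),
      ‖deriv (f · x) s‖ ≤ bound x / (r / 2) := fun x s hs =>
    norm_deriv_le_of_forall_mem_sphere_norm_le (half_pos hr)
      (((hdiff x).mono (hball s hs)).diffContOnCl_ball subset_rfl)
      fun w hw => hle w (hball s hs (Metric.sphere_subset_closedBall hw)) x
  have hderiv_meas : AEStronglyMeasurable (fun x => deriv (f · x) s₀) μ :=
    aestronglyMeasurable_of_tendsto_ae (𝓝[≠] 0)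
      (f := fun h x => h⁻¹ • (f (s₀ + h) x - f s₀ x))
      (fun h => ((hmeas _).sub (hmeas _)).const_smul _)
      (.of_forall fun x => hasDerivAt_iff_tendsto_slope_zero.1
        (hasDeriv x s₀ (Metric.mem_ball_self (half_pos hr))))
  exact (hasDerivAt_integral_of_dominated_loc_of_deriv_le
    (Metric.ball_mem_nhds s₀ (half_pos hr)) (.of_forall hmeas)
    (hbound.mono' (hmeas s₀) (.of_forall (hle s₀ (Metric.mem_ball_self hr)))) hderiv_meas
    (.of_forall hderiv_le) (hbound.div_const _) (.of_forall hasDeriv)).2.differentiableAt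

lemma eq_of_differentiable_of_forall_ofReal_eq {F : Type*} [NormedAddCommGroup F]
    [NormedSpace ℂ F] [CompleteSpace F] {f g : ℂ → F} (hf : Differentiable ℂ f)
    (hg : Differentiable ℂ g) (h : ∀ σ : ℝ, f σ = g σ) : f = g := by
  have hreal : Tendsto ((↑) : ℝ → ℂ) (𝓝[≠] 0) (𝓝[≠] 0) :=
    tendsto_nhdsWithin_iff.2 ⟨(continuous_ofReal.tendsto' 0 0 ofReal_zero).mono_left
      nhdsWithin_le_nhds, eventually_mem_nhdsWithin.mono fun σ hσ => ofReal_ne_zero.2 hσ⟩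
  exact AnalyticOnNhd.eq_of_frequently_eq (fun s _ => hf.analyticAt s)
    (fun s _ => hg.analyticAt s) (hreal.frequently (Frequently.of_forall h))

/-- The integral is entire in the parameter, and it is constant on the real line by translation
invariance. -/
lemma integral_eq_integral_zero_of_translate {E F : Type*} [AddCommGroup E] [Module ℝ E]
    [MeasurableSpace E] [MeasurableAdd E] {μ : Measure E} [μ.IsAddRightInvariant]
    [NormedAddCommGroup F] [NormedSpace ℂ F] [CompleteSpace F] {f : ℂ → E → F} (v : E)
    (hmeas : ∀ s, AEStronglyMeasurable (f s) μ) (hdiff : ∀ p, Differentiable ℂ (f · p))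
    (hbound : ∀ R : ℝ, ∃ bound : E → ℝ, Integrable bound μ ∧
      ∀ s, ‖s‖ ≤ R → ∀ p, ‖f s p‖ ≤ bound p)
    (htranslate : ∀ (σ : ℝ) (p : E), f σ p = f 0 (p + σ • v)) (s : ℂ) :
    ∫ p, f s p ∂μ = ∫ p, f 0 p ∂μ := by
  have hentire : Differentiable ℂ fun s => ∫ p, f s p ∂μ := fun s₀ => by
    obtain ⟨bound, hint, hle⟩ := hbound (‖s₀‖ + 1)
    refine differentiableAt_integral_of_norm_le one_pos hmeas
      (fun p => (hdiff p).differentiableOn) hint fun s hs => hle s ?_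
    linarith [norm_le_norm_add_norm_sub' s s₀, mem_ball_iff_norm.1 hs]
  have hreal (σ : ℝ) : ∫ p, f σ p ∂μ = ∫ p, f 0 p ∂μ := by
    simp only [htranslate]
    exact integral_add_right_eq_self (f 0) (σ • v)
  exact congrFun (eq_of_differentiable_of_forall_ofReal_eq hentire (differentiable_const _) hreal) s

end ContourShift

/-! ### The commutator function with a Gaussian cutoff -/

section GaussianCutoff

variable {E : Type*} [NormedAddCommGroup E] [InnerProductSpace ℝ E]

/-- The value at `p + s z` of the complex-bilinear extension of `‖·‖²` to the complexification
of `E`. -/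
noncomputable def complexNormSq (z : E) (s : ℂ) (p : E) : ℂ :=
  (‖p‖ : ℂ) ^ 2 + 2 * s * (⟪p, z⟫_ℝ : ℂ) + s ^ 2 * (‖z‖ : ℂ) ^ 2

lemma complexNormSq_ofReal (z : E) (σ : ℝ) (p : E) :
    complexNormSq z σ p = (‖p + σ • z‖ : ℂ) ^ 2 := by
  have hreal : ‖p + σ • z‖ ^ 2 = ‖p‖ ^ 2 + 2 * σ * ⟪p, z⟫_ℝ + σ ^ 2 * ‖z‖ ^ 2 := by
    rw [norm_add_sq_real, inner_smul_right, norm_smul, Real.norm_eq_abs, mul_pow, sq_abs]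
    ring
  rw [complexNormSq]
  exact_mod_cast hreal.symm

lemma complexNormSq_eq (z : E) (s : ℂ) (p : E) :
    complexNormSq z s p = ((‖p + s.re • z‖ ^ 2 - (s.im * ‖z‖) ^ 2 : ℝ) : ℂ) +
      ((2 * s.im * ⟪p + s.re • z, z⟫_ℝ : ℝ) : ℂ) * I := by
  have hre := complexNormSq_ofReal z s.re p
  rw [complexNormSq] at hre ⊢
  rw [inner_add_left, real_inner_smul_left, real_inner_self_eq_norm_sq]
  push_cast
  rw [← hre]
  conv_lhs => rw [← re_add_im s]
  linear_combination (s.im * ‖z‖ : ℂ) ^ 2 * I_sq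

lemma re_complexNormSq (z : E) (s : ℂ) (p : E) :
    (complexNormSq z s p).re = ‖p + s.re • z‖ ^ 2 - (s.im * ‖z‖) ^ 2 := by
  rw [complexNormSq_eq, ← mk_eq_add_mul_I]

lemma im_complexNormSq (z : E) (s : ℂ) (p : E) :
    (complexNormSq z s p).im = 2 * s.im * ⟪p + s.re • z, z⟫_ℝ := by
  rw [complexNormSq_eq, ← mk_eq_add_mul_I]

/-- This is where the mass-shell condition meets the light cone: the imaginary part of the energy
is dominated by that of the momentum. -/
lemma abs_im_le_of_sq_eq_complexNormSq_add {m : ℝ} {z p : E} {s a : ℂ}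
    (ha : a ^ 2 = complexNormSq z s p + m ^ 2) : |a.im| ≤ |s.im| * ‖z‖ := by
  set q := p + s.re • z with hq
  have hre : a.re ^ 2 - a.im ^ 2 = ‖q‖ ^ 2 - (s.im * ‖z‖) ^ 2 + m ^ 2 := by
    have h := congrArg re ha
    rw [add_re, re_complexNormSq, ← ofReal_pow, ofReal_re, ← hq, sq a, mul_re] at h
    linarith
  have him : a.re * a.im = s.im * ⟪q, z⟫_ℝ := by
    have h := congrArg im ha
    rw [add_im, im_complexNormSq, ← ofReal_pow, ofReal_im, ← hq, sq a, mul_im] at h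
    linarith
  have hcauchy : ⟪q, z⟫_ℝ ^ 2 ≤ ‖q‖ ^ 2 * ‖z‖ ^ 2 := by
    rw [← mul_pow]
    exact sq_le_sq.2 ((abs_real_inner_le_norm q z).trans (le_abs_self _))
  rw [← abs_norm z, ← abs_mul, ← sq_le_sq]
  by_contra! hlt
  have hq_lt : ‖q‖ ^ 2 < a.re ^ 2 := by linarith [sq_nonneg m]
  have himpos : 0 < a.im ^ 2 := (sq_nonneg _).trans_lt hlt
  refine lt_irrefl ((a.re * a.im) ^ 2) ?_
  calc (a.re * a.im) ^ 2 = s.im ^ 2 * ⟪q, z⟫_ℝ ^ 2 := by rw [him, mul_pow]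
    _ ≤ s.im ^ 2 * (‖q‖ ^ 2 * ‖z‖ ^ 2) := by gcongr
    _ = ‖q‖ ^ 2 * (s.im * ‖z‖) ^ 2 := by ring
    _ ≤ ‖q‖ ^ 2 * a.im ^ 2 := by gcongr
    _ < a.re ^ 2 * a.im ^ 2 := by gcongr
    _ = (a.re * a.im) ^ 2 := (mul_pow _ _ _).symm

/-- The integrand `exp (-ε k²) exp (-i k·z) sin (t √(k² + m²)) / √(k² + m²)` of the commutator
function at the spacetime point `(t, z)`, with a Gaussian cutoff, at the complex momentum
`k = p + s z`. -/
noncomputable def commutatorIntegrand (m ε t : ℝ) (z : E) (s : ℂ) (p : E) : ℂ :=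
  exp (-ε * complexNormSq z s p) * exp (-I * (⟪p, z⟫_ℝ + s * (‖z‖ : ℂ) ^ 2)) *
    sincSqrt t (complexNormSq z s p + m ^ 2)

lemma commutatorIntegrand_ofReal (m ε t : ℝ) (z : E) (σ : ℝ) (p : E) :
    commutatorIntegrand m ε t z σ p = commutatorIntegrand m ε t z 0 (p + σ • z) := by
  have hzero := complexNormSq_ofReal z 0 (p + σ • z)
  rw [ofReal_zero, zero_smul, add_zero] at hzero
  rw [commutatorIntegrand, commutatorIntegrand, hzero, complexNormSq_ofReal, inner_add_left,
    real_inner_smul_left, real_inner_self_eq_norm_sq]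
  push_cast
  rw [zero_mul, add_zero]

lemma norm_commutatorIntegrand_le (m ε t : ℝ) (z : E) (s : ℂ) (p : E) :
    ‖commutatorIntegrand m ε t z s p‖ ≤ Real.exp (-ε * ‖p + s.re • z‖ ^ 2) *
      (|t| * Real.exp (ε * (|s.im| * ‖z‖) ^ 2 + s.im * ‖z‖ ^ 2 + |t| * (|s.im| * ‖z‖))) := by
  obtain ⟨a, ha⟩ := IsAlgClosed.exists_pow_nat_eq (complexNormSq z s p + m ^ 2) two_pos
  have hgauss : ‖exp (-ε * complexNormSq z s p)‖ =
      Real.exp (-ε * ‖p + s.re • z‖ ^ 2 + ε * (|s.im| * ‖z‖) ^ 2) := by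
    rw [norm_exp, ← ofReal_neg, re_ofReal_mul, re_complexNormSq, mul_pow, mul_pow, sq_abs]
    ring_nf
  have hwave : ‖exp (-I * (⟪p, z⟫_ℝ + s * (‖z‖ : ℂ) ^ 2))‖ = Real.exp (s.im * ‖z‖ ^ 2) := by
    rw [norm_exp]
    simp [← ofReal_pow]
  calc ‖commutatorIntegrand m ε t z s p‖
      = Real.exp (-ε * ‖p + s.re • z‖ ^ 2 + ε * (|s.im| * ‖z‖) ^ 2) * Real.exp (s.im * ‖z‖ ^ 2) *
        ‖sincSqrt t (a ^ 2)‖ := by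
        rw [commutatorIntegrand, norm_mul, norm_mul, hgauss, hwave, ha]
    _ ≤ Real.exp (-ε * ‖p + s.re • z‖ ^ 2 + ε * (|s.im| * ‖z‖) ^ 2) * Real.exp (s.im * ‖z‖ ^ 2) *
        (|t| * Real.exp (|t| * (|s.im| * ‖z‖))) := by
        gcongr
        refine (norm_sincSqrt_sq_le t a).trans ?_
        gcongr
        exact abs_im_le_of_sq_eq_complexNormSq_add ha
    _ = _ := by
        simp only [Real.exp_add]
        ring

lemma differentiable_commutatorIntegrand (m ε t : ℝ) (z p : E) :
    Differentiable ℂ (commutatorIntegrand m ε t z · p) := by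
  have := differentiable_sincSqrt t
  unfold commutatorIntegrand complexNormSq
  fun_prop

lemma continuous_commutatorIntegrand (m ε t : ℝ) (z : E) (s : ℂ) :
    Continuous (commutatorIntegrand m ε t z s) := by
  have := (differentiable_sincSqrt t).continuous
  unfold commutatorIntegrand complexNormSq
  fun_prop

lemma exp_neg_mul_norm_add_sq_le {ε : ℝ} (hε : 0 ≤ ε) (p v : E) :
    Real.exp (-ε * ‖p + v‖ ^ 2) ≤ Real.exp (-(ε / 2) * ‖p‖ ^ 2) * Real.exp (ε * ‖v‖ ^ 2) := by
  have htriangle : ‖p‖ ^ 2 ≤ 2 * (‖p + v‖ ^ 2 + ‖v‖ ^ 2) := by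
    have h := parallelogram_law_with_norm ℝ (p + v) v
    rw [add_sub_cancel_right] at h
    nlinarith [sq_nonneg ‖p + v + v‖]
  rw [← Real.exp_add, Real.exp_le_exp]
  nlinarith

/-- The integrand `exp (-ε |p|²) (2 ω)⁻¹ exp (i (ω t - p·z))`, with `ω = √(|p|² + m²)`, of the
two-point function at the spacetime point `(t, z)`, with a Gaussian cutoff. -/
noncomputable def twoPointIntegrand (m ε t : ℝ) (z p : E) : ℂ :=
  ((Real.exp (-ε * ‖p‖ ^ 2) * (2 * √(‖p‖ ^ 2 + m ^ 2))⁻¹ : ℝ) : ℂ) *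
    exp (I * ((√(‖p‖ ^ 2 + m ^ 2) * t - ⟪p, z⟫_ℝ : ℝ) : ℂ))

lemma twoPointIntegrand_sub_conj_neg {m : ℝ} (hm : 0 < m) (ε t : ℝ) (z p : E) :
    twoPointIntegrand m ε t z p - (starRingEnd ℂ) (twoPointIntegrand m ε t z (-p)) =
      I * commutatorIntegrand m ε t z 0 p := by
  set ω := √(‖p‖ ^ 2 + m ^ 2) with hω
  have hω_ne : (ω : ℂ) ≠ 0 := ofReal_ne_zero.2 (by positivity)
  have hω_sq : (ω : ℂ) ^ 2 = (‖p‖ : ℂ) ^ 2 + m ^ 2 := by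
    exact_mod_cast Real.sq_sqrt (by positivity : 0 ≤ ‖p‖ ^ 2 + m ^ 2)
  have hsinc : sincSqrt t ((‖p‖ : ℂ) ^ 2 + m ^ 2) = sin (t * ω) / ω := by
    rw [← hω_sq, eq_div_iff hω_ne, mul_comm, mul_sincSqrt_sq]
  have hwave : exp (I * (ω * t - ⟪p, z⟫_ℝ)) = exp (t * ω * I) * exp (-I * ⟪p, z⟫_ℝ) := by
    rw [← exp_add]
    ring_nf
  have hwave_conj : exp (-I * (ω * t + ⟪p, z⟫_ℝ)) =
      exp (-(t * ω) * I) * exp (-I * ⟪p, z⟫_ℝ) := by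
    rw [← exp_add]
    ring_nf
  simp only [twoPointIntegrand, commutatorIntegrand, complexNormSq, norm_neg, inner_neg_left,
    sub_neg_eq_add, map_mul, conj_ofReal, ← exp_conj, conj_I, ← hω, mul_zero, zero_mul, add_zero,
    ne_eq, OfNat.ofNat_ne_zero, not_false_eq_true, zero_pow, hsinc, sin]
  push_cast
  rw [hwave, hwave_conj]
  generalize exp (t * ω * I) = u, exp (-(t * ω) * I) = v
  field_simp
  linear_combination (u - v) * I_sq

lemma continuous_twoPointIntegrand {m : ℝ} (hm : 0 < m) (ε t : ℝ) (z : E) :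
    Continuous (twoPointIntegrand m ε t z) := by
  have hω (p : E) : 2 * √(‖p‖ ^ 2 + m ^ 2) ≠ 0 := by positivity
  unfold twoPointIntegrand
  fun_prop (disch := exact hω _)

lemma norm_twoPointIntegrand_le {m : ℝ} (hm : 0 < m) (ε t : ℝ) (z p : E) :
    ‖twoPointIntegrand m ε t z p‖ ≤ Real.exp (-ε * ‖p‖ ^ 2) * (2 * m)⁻¹ := by
  have hω : m ≤ √(‖p‖ ^ 2 + m ^ 2) := Real.le_sqrt_of_sq_le (by linarith [sq_nonneg ‖p‖])
  rw [twoPointIntegrand, norm_mul, norm_exp_I_mul_ofReal, mul_one, norm_real,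
    Real.norm_of_nonneg (by positivity)]
  gcongr

variable [FiniteDimensional ℝ E] [MeasurableSpace E] [BorelSpace E]

lemma integrable_exp_neg_mul_norm_sq {ε : ℝ} (hε : 0 < ε) :
    Integrable fun p : E => Real.exp (-ε * ‖p‖ ^ 2) :=
  .of_integral_ne_zero (by rw [GaussianFourier.integral_rexp_neg_mul_sq_norm hε]; positivity)

lemma integral_commutatorIntegrand_eq (m t : ℝ) {ε : ℝ} (hε : 0 < ε) (z : E) (s : ℂ) :
    ∫ p, commutatorIntegrand m ε t z s p = ∫ p, commutatorIntegrand m ε t z 0 p := by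
  refine integral_eq_integral_zero_of_translate z
    (fun s => (continuous_commutatorIntegrand m ε t z s).aestronglyMeasurable)
    (differentiable_commutatorIntegrand m ε t z) (fun R => ?_)
    (commutatorIntegrand_ofReal m ε t z) s
  refine ⟨fun p => Real.exp (-(ε / 2) * ‖p‖ ^ 2) * (Real.exp (ε * (R * ‖z‖) ^ 2) *
    (|t| * Real.exp (ε * (R * ‖z‖) ^ 2 + R * ‖z‖ ^ 2 + |t| * (R * ‖z‖)))),
    (integrable_exp_neg_mul_norm_sq (half_pos hε)).mul_const _, fun s hs p => ?_⟩
  have hre : |s.re| ≤ R := (abs_re_le_norm s).trans hs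
  have him : |s.im| ≤ R := (abs_im_le_norm s).trans hs
  have him' : s.im ≤ R := (le_abs_self _).trans him
  calc ‖commutatorIntegrand m ε t z s p‖
      ≤ Real.exp (-ε * ‖p + s.re • z‖ ^ 2) * (|t| *
        Real.exp (ε * (|s.im| * ‖z‖) ^ 2 + s.im * ‖z‖ ^ 2 + |t| * (|s.im| * ‖z‖))) :=
        norm_commutatorIntegrand_le m ε t z s p
    _ ≤ Real.exp (-(ε / 2) * ‖p‖ ^ 2) * Real.exp (ε * (|s.re| * ‖z‖) ^ 2) * (|t| *
        Real.exp (ε * (|s.im| * ‖z‖) ^ 2 + s.im * ‖z‖ ^ 2 + |t| * (|s.im| * ‖z‖))) := by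
        gcongr
        exact (exp_neg_mul_norm_add_sq_le hε.le p (s.re • z)).trans_eq
          (by rw [norm_smul, Real.norm_eq_abs])
    _ ≤ Real.exp (-(ε / 2) * ‖p‖ ^ 2) * Real.exp (ε * (R * ‖z‖) ^ 2) * (|t| *
        Real.exp (ε * (R * ‖z‖) ^ 2 + R * ‖z‖ ^ 2 + |t| * (R * ‖z‖))) := by gcongr
    _ = _ := mul_assoc _ _ _

/-- The contour is shifted to `p - i ((‖z‖ - |t|) / (2 ε ‖z‖)) z`, which minimizes the bound. -/
lemma norm_integral_commutatorIntegrand_le (m : ℝ) {ε t : ℝ} (hε : 0 < ε) {z : E}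
    (htz : |t| < ‖z‖) :
    ‖∫ p, commutatorIntegrand m ε t z 0 p‖ ≤ (Real.pi / ε) ^ (Module.finrank ℝ E / 2 : ℝ) *
      (|t| * Real.exp (-(‖z‖ - |t|) ^ 2 / (4 * ε))) := by
  have hz : 0 < ‖z‖ := (abs_nonneg t).trans_lt htz
  set l := (‖z‖ - |t|) / (2 * ε * ‖z‖) with hl
  have hl_nonneg : 0 ≤ l := div_nonneg (sub_nonneg.2 htz.le) (by positivity)
  have hexponent : ε * (|-l| * ‖z‖) ^ 2 + -l * ‖z‖ ^ 2 + |t| * (|-l| * ‖z‖) =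
      -(‖z‖ - |t|) ^ 2 / (4 * ε) := by
    rw [abs_neg, abs_of_nonneg hl_nonneg, hl]
    field_simp
    ring
  rw [← integral_commutatorIntegrand_eq m t hε z ⟨0, -l⟩,
    ← GaussianFourier.integral_rexp_neg_mul_sq_norm hε, ← integral_mul_const]
  refine norm_integral_le_of_norm_le ((integrable_exp_neg_mul_norm_sq hε).mul_const _)
    (.of_forall fun p => ?_)
  simpa only [zero_smul, add_zero, hexponent] using
    norm_commutatorIntegrand_le m ε t z ⟨0, -l⟩ p

lemma integrable_twoPointIntegrand {m ε : ℝ} (hm : 0 < m) (hε : 0 < ε) (t : ℝ) (z : E) :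
    Integrable (twoPointIntegrand m ε t z) :=
  ((integrable_exp_neg_mul_norm_sq hε).mul_const (2 * m)⁻¹).mono'
    (continuous_twoPointIntegrand hm ε t z).aestronglyMeasurable
    (.of_forall (norm_twoPointIntegrand_le hm ε t z))

lemma abs_im_integral_twoPointIntegrand_le {m ε t : ℝ} (hm : 0 < m) (hε : 0 < ε) {z : E}
    (htz : |t| < ‖z‖) :
    |(∫ p, twoPointIntegrand m ε t z p).im| ≤ (Real.pi / ε) ^ (Module.finrank ℝ E / 2 : ℝ) *
      (|t| * Real.exp (-(‖z‖ - |t|) ^ 2 / (4 * ε))) := by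
  have hint := integrable_twoPointIntegrand hm hε t z
  have hconj_int : Integrable fun p => (starRingEnd ℂ) (twoPointIntegrand m ε t z (-p)) :=
    (conjLIE.toContinuousLinearEquiv.integrable_comp_iff.2 hint).comp_neg
  have hreflect : (∫ p, twoPointIntegrand m ε t z p) -
      (starRingEnd ℂ) (∫ p, twoPointIntegrand m ε t z p) =
      I * ∫ p, commutatorIntegrand m ε t z 0 p := by
    rw [← integral_conj,
      ← integral_neg_eq_self (fun p => (starRingEnd ℂ) (twoPointIntegrand m ε t z p)),
      ← integral_sub hint hconj_int, ← integral_const_mul]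
    exact integral_congr_ae (.of_forall (twoPointIntegrand_sub_conj_neg hm ε t z))
  have hnorm : 2 * |(∫ p, twoPointIntegrand m ε t z p).im| =
      ‖∫ p, commutatorIntegrand m ε t z 0 p‖ := by
    have h := congrArg norm hreflect
    rwa [sub_conj, norm_mul, norm_mul, norm_I, mul_one, one_mul, norm_real, Real.norm_eq_abs,
      abs_mul, abs_two] at h
  have hcomm := norm_integral_commutatorIntegrand_le m hε htz
  linarith [abs_nonneg (∫ p, twoPointIntegrand m ε t z p).im]

end GaussianCutoff

/-! ### The mass shell -/

/-- The spatial part of a spacetime point, as a Euclidean vector. -/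
def spatialPart (x : Fin 4 → ℝ) : EuclideanSpace ℝ (Fin 3) := WithLp.toLp 2 (Fin.tail x)

@[fun_prop]
lemma continuous_spatialPart : Continuous spatialPart := by
  unfold spatialPart Fin.tail
  fun_prop

lemma minkowskiQ_eq (x : Fin 4 → ℝ) : minkowskiQ x = x 0 ^ 2 - ‖spatialPart x‖ ^ 2 := by
  simp only [minkowskiQ, spatialPart, EuclideanSpace.real_norm_sq_eq, Fin.sum_univ_three, Fin.tail]
  rw [sub_sub, sub_sub, ← add_assoc]
  rfl

lemma minkowskiPairing_eq (p x : Fin 4 → ℝ) :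
    minkowskiPairing p x = p 0 * x 0 - ⟪spatialPart p, spatialPart x⟫_ℝ := by
  simp only [minkowskiPairing, spatialPart, PiLp.inner_apply, Fin.sum_univ_three, Fin.tail,
    RCLike.inner_apply, conj_trivial]
  rw [sub_sub, sub_sub, ← add_assoc]
  simp only [mul_comm (x _)]
  rfl

lemma minkowskiQ_neg_iff {x : Fin 4 → ℝ} : minkowskiQ x < 0 ↔ |x 0| < ‖spatialPart x‖ := by
  rw [minkowskiQ_eq, sub_neg, sq_lt_sq, abs_norm]

@[fun_prop]
lemma continuous_minkowskiPairing {X : Type*} [TopologicalSpace X] {p x : X → Fin 4 → ℝ}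
    (hp : Continuous p) (hx : Continuous x) :
    Continuous fun a => minkowskiPairing (p a) (x a) := by
  unfold minkowskiPairing
  fun_prop

/-- The point `(√(‖p‖² + m²), p)` of the mass-`m` shell with momentum `p`. -/
noncomputable def massShellPoint (m : ℝ) (p : EuclideanSpace ℝ (Fin 3)) : Fin 4 → ℝ :=
  Fin.cons √(‖p‖ ^ 2 + m ^ 2) p.ofLp

lemma massShellPoint_zero (m : ℝ) (p : EuclideanSpace ℝ (Fin 3)) :
    massShellPoint m p 0 = √(‖p‖ ^ 2 + m ^ 2) := rfl

lemma spatialPart_massShellPoint (m : ℝ) (p : EuclideanSpace ℝ (Fin 3)) :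
    spatialPart (massShellPoint m p) = p := rfl

lemma continuous_massShellPoint (m : ℝ) : Continuous (massShellPoint m) := by
  refine continuous_pi (Fin.cases ?_ fun i => ?_)
  · exact Real.continuous_sqrt.comp (by fun_prop)
  · exact (continuous_apply i).comp (PiLp.continuous_ofLp 2 _)

lemma measurableEmbedding_massShellPoint (m : ℝ) : MeasurableEmbedding (massShellPoint m) :=
  (continuous_massShellPoint m).measurableEmbedding
    (Function.LeftInverse.injective (spatialPart_massShellPoint m))

lemma map_withDensity_comp {α β : Type*} [MeasurableSpace α] [MeasurableSpace β] {μ : Measure α}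
    {ν : Measure β} {f : α → β} (hf : MeasurePreserving f μ ν) {ρ : β → ENNReal}
    (hρ : Measurable ρ) : (μ.withDensity (ρ ∘ f)).map f = ν.withDensity ρ := by
  ext s hs
  rw [Measure.map_apply hf.measurable hs, withDensity_apply _ (hf.measurable hs),
    withDensity_apply _ hs]
  exact hf.setLIntegral_comp_preimage hs hρ

lemma energyOf_ofLp (m : ℝ) (p : EuclideanSpace ℝ (Fin 3)) :
    energyOf m p.ofLp = √(‖p‖ ^ 2 + m ^ 2) := by
  rw [energyOf, EuclideanSpace.real_norm_sq_eq]

lemma massShellMeasure_eq_map (m : ℝ) :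
    massShellMeasure m = ((volume : Measure (EuclideanSpace ℝ (Fin 3))).withDensity
      fun p => ENNReal.ofReal (2 * √(‖p‖ ^ 2 + m ^ 2))⁻¹).map (massShellPoint m) := by
  have hρ : Measurable fun p : Fin 3 → ℝ => ENNReal.ofReal (2 * energyOf m p)⁻¹ := by
    unfold energyOf
    fun_prop
  have hcons : Measurable fun p : Fin 3 → ℝ => (Fin.cons (energyOf m p) p : Fin 4 → ℝ) := by
    simpa only [Function.comp_def, massShellPoint, ← energyOf_ofLp] using
      (continuous_massShellPoint m).measurable.comp (WithLp.measurable_toLp 2 _)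
  rw [massShellMeasure, ← map_withDensity_comp (PiLp.volume_preserving_ofLp (Fin 3)) hρ,
    Measure.map_map hcons (WithLp.measurable_ofLp 2 _)]
  simp only [Function.comp_def, energyOf_ofLp]
  rfl

instance (m : ℝ) : SFinite (massShellMeasure m) := by
  rw [massShellMeasure]
  infer_instance

section MassShell

variable {F : Type*} [NormedAddCommGroup F] [NormedSpace ℝ F]

lemma integral_massShellMeasure (m : ℝ) (φ : (Fin 4 → ℝ) → F) :
    ∫ p, φ p ∂massShellMeasure m = ∫ p, (2 * √(‖p‖ ^ 2 + m ^ 2))⁻¹ • φ (massShellPoint m p) := by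
  rw [massShellMeasure_eq_map, (measurableEmbedding_massShellPoint m).integral_map,
    integral_withDensity_eq_integral_toReal_smul (by fun_prop)
      (.of_forall fun _ => ENNReal.ofReal_lt_top)]
  congr! with _
  exact ENNReal.toReal_ofReal (by positivity)

lemma integrable_massShellMeasure_iff {m : ℝ} {φ : (Fin 4 → ℝ) → F} :
    Integrable φ (massShellMeasure m) ↔
      Integrable fun p => (2 * √(‖p‖ ^ 2 + m ^ 2))⁻¹ • φ (massShellPoint m p) := by
  rw [massShellMeasure_eq_map, (measurableEmbedding_massShellPoint m).integrable_map_iff,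
    integrable_withDensity_iff_integrable_smul' (by fun_prop)
      (.of_forall fun _ => ENNReal.ofReal_lt_top)]
  congr! with _
  exact ENNReal.toReal_ofReal (by positivity)

end MassShell

/-! ### The two-point function -/

/-- The two-point function `x ↦ ∫ exp (i p·x) dΩ_m⁺(p)`, with the Gaussian cutoff `exp (-ε |p|²)`
in the spatial momentum, without which the integral does not converge. -/
noncomputable def regularizedTwoPoint (m ε : ℝ) (x : Fin 4 → ℝ) : ℂ :=
  ∫ p, (Real.exp (-ε * ‖spatialPart p‖ ^ 2) : ℂ) * exp (I * minkowskiPairing p x)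
    ∂massShellMeasure m

lemma regularizedTwoPoint_eq (m ε : ℝ) (x : Fin 4 → ℝ) :
    regularizedTwoPoint m ε x = ∫ p, twoPointIntegrand m ε (x 0) (spatialPart x) p := by
  rw [regularizedTwoPoint, integral_massShellMeasure]
  congr! 2 with p
  rw [minkowskiPairing_eq, massShellPoint_zero, spatialPart_massShellPoint, twoPointIntegrand,
    real_smul]
  push_cast
  ring

lemma integrable_exp_neg_mul_norm_spatialPart_sq {m ε : ℝ} (hm : 0 < m) (hε : 0 < ε) :
    Integrable (fun p => Real.exp (-ε * ‖spatialPart p‖ ^ 2)) (massShellMeasure m) := by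
  rw [integrable_massShellMeasure_iff]
  refine (integrable_exp_neg_mul_norm_sq hε).bdd_mul (c := (2 * m)⁻¹) (by fun_prop)
    (.of_forall fun p => ?_)
  have hω : m ≤ √(‖p‖ ^ 2 + m ^ 2) := Real.le_sqrt_of_sq_le (by linarith [sq_nonneg ‖p‖])
  rw [Real.norm_of_nonneg (by positivity)]
  gcongr

lemma abs_im_regularizedTwoPoint_le {m ε : ℝ} (hm : 0 < m) (hε : 0 < ε) {x : Fin 4 → ℝ}
    (hx : minkowskiQ x < 0) :
    |(regularizedTwoPoint m ε x).im| ≤ (Real.pi / ε) ^ (3 / 2 : ℝ) *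
      (|x 0| * Real.exp (-(‖spatialPart x‖ - |x 0|) ^ 2 / (4 * ε))) := by
  have h := abs_im_integral_twoPointIntegrand_le hm hε (minkowskiQ_neg_iff.1 hx)
  rwa [← regularizedTwoPoint_eq, finrank_euclideanSpace_fin, Nat.cast_ofNat] at h

lemma tendsto_div_rpow_mul_exp_neg_div {a b s : ℝ} (ha : 0 ≤ a) (hb : 0 < b) :
    Tendsto (fun ε => (a / ε) ^ s * Real.exp (-b / ε)) (𝓝[>] 0) (𝓝 0) := by
  have h := ((tendsto_rpow_mul_exp_neg_mul_atTop_nhds_zero s b hb).comp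
    tendsto_inv_nhdsGT_zero).const_mul (a ^ s)
  rw [mul_zero] at h
  refine h.congr' (eventually_mem_nhdsWithin.mono fun ε (hε : 0 < ε) => ?_)
  simp only [Function.comp_apply, div_eq_mul_inv, Real.mul_rpow ha (inv_nonneg.2 hε.le), mul_assoc]

lemma tendstoUniformlyOn_im_regularizedTwoPoint {m : ℝ} (hm : 0 < m) {K : Set (Fin 4 → ℝ)}
    (hK : IsCompact K) (hspacelike : ∀ x ∈ K, minkowskiQ x < 0) :
    TendstoUniformlyOn (fun ε x => (regularizedTwoPoint m ε x).im) 0 (𝓝[>] 0) K := by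
  obtain ⟨δ, hδ, hgap⟩ : ∃ δ, 0 < δ ∧ ∀ x ∈ K, δ ≤ ‖spatialPart x‖ - |x 0| :=
    hK.exists_forall_le' (by fun_prop) fun x hx =>
      sub_pos.2 (minkowskiQ_neg_iff.1 (hspacelike x hx))
  obtain ⟨T, hT⟩ := hK.exists_bound_of_continuousOn (f := fun x => x 0) (by fun_prop)
  have hlim : Tendsto (fun ε => (Real.pi / ε) ^ (3 / 2 : ℝ) * Real.exp (-(δ ^ 2 / 4) / ε) * T)
      (𝓝[>] 0) (𝓝 0) := by
    simpa only [zero_mul] using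
      (tendsto_div_rpow_mul_exp_neg_div Real.pi_nonneg (by positivity)).mul_const T
  refine Metric.tendstoUniformlyOn_iff.2 fun η hη => ?_
  filter_upwards [hlim.eventually_lt_const hη, eventually_mem_nhdsWithin] with ε hlt hε x hx
  have hε_pos : 0 < ε := hε
  rw [Pi.zero_apply, dist_zero_left, Real.norm_eq_abs]
  refine lt_of_le_of_lt ?_ hlt
  calc |(regularizedTwoPoint m ε x).im|
      ≤ (Real.pi / ε) ^ (3 / 2 : ℝ) *
        (|x 0| * Real.exp (-(‖spatialPart x‖ - |x 0|) ^ 2 / (4 * ε))) :=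
        abs_im_regularizedTwoPoint_le hm hε (hspacelike x hx)
    _ ≤ (Real.pi / ε) ^ (3 / 2 : ℝ) * (T * Real.exp (-δ ^ 2 / (4 * ε))) := by
        gcongr
        · exact (abs_nonneg _).trans (hT x hx)
        · exact hT x hx
        · exact hgap x hx
    _ = (Real.pi / ε) ^ (3 / 2 : ℝ) * Real.exp (-(δ ^ 2 / 4) / ε) * T := by
        rw [← neg_div, div_div]
        ring

/-! ### Smearing the two-point function -/

lemma conj_minkFourier_mul_minkFourier (f g : (Fin 4 → ℝ) → ℝ) (p : Fin 4 → ℝ) :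
    (starRingEnd ℂ) (minkFourier f p) * minkFourier g p =
      ∫ w : (Fin 4 → ℝ) × (Fin 4 → ℝ),
        ((f w.1 * g w.2 : ℝ) : ℂ) * exp (I * minkowskiPairing p (w.2 - w.1)) := by
  rw [minkFourier, minkFourier, ← integral_conj, ← integral_prod_mul]
  refine integral_congr_ae (.of_forall fun w => ?_)
  dsimp only
  have hpairing : minkowskiPairing p (w.2 - w.1) =
      minkowskiPairing p w.2 - minkowskiPairing p w.1 := by
    simp only [minkowskiPairing, Pi.sub_apply]
    ring
  rw [hpairing, map_mul, conj_ofReal, ← exp_conj, map_mul, conj_I, conj_ofReal, mul_mul_mul_comm,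
    ← exp_add]
  push_cast
  ring_nf

section Smearing

variable {μ : Measure (Fin 4 → ℝ)} {ρ : (Fin 4 → ℝ) → ℝ} {f g : (Fin 4 → ℝ) → ℝ}

lemma integrable_smeared_wave (hρ : Integrable ρ μ) (hf : Integrable f) (hg : Integrable g) :
    Integrable (fun z : (Fin 4 → ℝ) × (Fin 4 → ℝ) × (Fin 4 → ℝ) =>
      ((f z.2.1 * g z.2.2 : ℝ) : ℂ) *
        (ρ z.1 * exp (I * minkowskiPairing z.1 (z.2.2 - z.2.1)))) (μ.prod volume) := by
  have hweight : Integrable (fun z : (Fin 4 → ℝ) × (Fin 4 → ℝ) × (Fin 4 → ℝ) =>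
      ((f z.2.1 * g z.2.2 : ℝ) : ℂ) * (ρ z.1 : ℂ)) (μ.prod volume) :=
    (hρ.ofReal.mul_prod (hf.mul_prod hg).ofReal).congr (.of_forall fun z => mul_comm _ _)
  simp_rw [← mul_assoc]
  refine hweight.mul_bdd (c := 1) (Continuous.aestronglyMeasurable (by fun_prop))
    (.of_forall fun z => ?_)
  rw [norm_exp_I_mul_ofReal]

variable [SFinite μ]

lemma integral_mul_conj_minkFourier_mul_minkFourier (hρ : Integrable ρ μ) (hf : Integrable f)
    (hg : Integrable g) :
    ∫ p, (ρ p : ℂ) * ((starRingEnd ℂ) (minkFourier f p) * minkFourier g p) ∂μ =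
      ∫ w : (Fin 4 → ℝ) × (Fin 4 → ℝ), ((f w.1 * g w.2 : ℝ) : ℂ) *
        ∫ p, ρ p * exp (I * minkowskiPairing p (w.2 - w.1)) ∂μ := by
  simp_rw [conj_minkFourier_mul_minkFourier, ← integral_const_mul, mul_left_comm (ρ _ : ℂ)]
  exact integral_integral_swap (integrable_smeared_wave hρ hf hg)

lemma im_integral_mul_conj_minkFourier_mul_minkFourier (hρ : Integrable ρ μ) (hf : Integrable f)
    (hg : Integrable g) :
    (∫ p, (ρ p : ℂ) * ((starRingEnd ℂ) (minkFourier f p) * minkFourier g p) ∂μ).im =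
      ∫ w : (Fin 4 → ℝ) × (Fin 4 → ℝ), (f w.1 * g w.2) *
        (∫ p, ρ p * exp (I * minkowskiPairing p (w.2 - w.1)) ∂μ).im := by
  have hint := (integrable_smeared_wave hρ hf hg).integral_prod_right
  simp only [integral_const_mul] at hint
  rw [integral_mul_conj_minkFourier_mul_minkFourier hρ hf hg]
  simpa only [RCLike.im_eq_complex_im, im_ofReal_mul] using (integral_im hint).symm

end Smearing

lemma tendsto_integral_exp_neg_mul_smul {α F : Type*} [MeasurableSpace α] {μ : Measure α}
    [NormedAddCommGroup F] [NormedSpace ℝ F] {φ : α → F} {u : α → ℝ} (hφ : Integrable φ μ)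
    (hu : AEStronglyMeasurable u μ) (hu_nonneg : ∀ x, 0 ≤ u x) :
    Tendsto (fun ε : ℝ => ∫ x, Real.exp (-ε * u x) • φ x ∂μ) (𝓝[>] 0) (𝓝 (∫ x, φ x ∂μ)) := by
  refine tendsto_integral_filter_of_dominated_convergence (fun x => ‖φ x‖)
    (.of_forall fun ε => ?_) ?_ hφ.norm (.of_forall fun x => ?_)
  · exact (Real.continuous_exp.comp_aestronglyMeasurable (hu.const_mul (-ε))).smul hφ.1
  · filter_upwards [eventually_mem_nhdsWithin] with ε (hε : 0 < ε)
    refine .of_forall fun x => ?_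
    rw [norm_smul, Real.norm_of_nonneg (Real.exp_nonneg _)]
    refine mul_le_of_le_one_left (norm_nonneg _) (Real.exp_le_one_iff.2 ?_)
    nlinarith [hu_nonneg x]
  · refine (Continuous.tendsto' (by fun_prop) 0 (φ x) (by simp)).mono_left nhdsWithin_le_nhds

lemma tendsto_integral_mul_zero_of_tendstoUniformlyOn {α ι : Type*} [MeasurableSpace α]
    {μ : Measure α} {l : Filter ι} {h : α → ℝ} {F : ι → α → ℝ} {s : Set α} (hh : Integrable h μ)
    (hs : ∀ x ∉ s, h x = 0) (hF : TendstoUniformlyOn F 0 l s) :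
    Tendsto (fun i => ∫ x, h x * F i x ∂μ) l (𝓝 0) := by
  refine Metric.tendsto_nhds.2 fun η hη => ?_
  have hpos : 0 < ∫ x, ‖h x‖ ∂μ + 1 := by positivity
  filter_upwards [Metric.tendstoUniformlyOn_iff.1 hF (η / (∫ x, ‖h x‖ ∂μ + 1)) (by positivity)]
    with i hi
  have hle (x : α) : ‖h x * F i x‖ ≤ ‖h x‖ * (η / (∫ x, ‖h x‖ ∂μ + 1)) := by
    by_cases hx : x ∈ s
    · have hFx := (hi x hx).le
      rw [Pi.zero_apply, dist_zero_left] at hFx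
      rw [norm_mul]
      gcongr
    · simp [hs x hx]
  rw [dist_zero_right]
  calc ‖∫ x, h x * F i x ∂μ‖ ≤ ∫ x, ‖h x‖ * (η / (∫ x, ‖h x‖ ∂μ + 1)) ∂μ :=
        norm_integral_le_of_norm_le (hh.norm.mul_const _) (.of_forall hle)
    _ = (∫ x, ‖h x‖ ∂μ) / (∫ x, ‖h x‖ ∂μ + 1) * η := by rw [integral_mul_const]; ring
    _ < η := mul_lt_of_lt_one_left hη ((div_lt_one hpos).2 (lt_add_one _))

/-! ### Decay of the Fourier transform on the mass shell -/

lemma norm_minkFourier_le (f : (Fin 4 → ℝ) → ℝ) (p : Fin 4 → ℝ) :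
    ‖minkFourier f p‖ ≤ ∫ x, ‖f x‖ := by
  refine (norm_integral_le_integral_norm _).trans_eq ?_
  simp_rw [norm_mul, norm_exp_I_mul_ofReal, mul_one, norm_real]

lemma integrable_mul_wave {f : (Fin 4 → ℝ) → ℝ} (hf : Integrable f) (p : Fin 4 → ℝ) :
    Integrable fun x => (f x : ℂ) * exp (I * minkowskiPairing p x) :=
  hf.ofReal.mul_bdd (c := 1) (Continuous.aestronglyMeasurable (by fun_prop))
    (.of_forall fun x => (norm_exp_I_mul_ofReal _).le)

lemma continuous_minkFourier {f : (Fin 4 → ℝ) → ℝ} (hf : Integrable f) :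
    Continuous (minkFourier f) := by
  refine continuous_of_dominated (fun p => (integrable_mul_wave hf p).1) (fun p => ?_) hf.norm
    (.of_forall fun x => by fun_prop)
  refine .of_forall fun x => ?_
  rw [norm_mul, norm_exp_I_mul_ofReal, mul_one, norm_real]

/-- The linear form `x ↦ p·x` on spacetime. -/
noncomputable def minkowskiPairingCLM (p : Fin 4 → ℝ) : (Fin 4 → ℝ) →L[ℝ] ℝ :=
  p 0 • .proj 0 - p 1 • .proj 1 - p 2 • .proj 2 - p 3 • .proj 3

lemma hasFDerivAt_exp_minkowskiPairing (p x : Fin 4 → ℝ) :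
    HasFDerivAt (fun x => exp (I * minkowskiPairing p x))
      (exp (I * minkowskiPairing p x) • I • ofRealCLM.comp (minkowskiPairingCLM p)) x :=
  ((ofRealCLM.comp (minkowskiPairingCLM p)).hasFDerivAt.const_mul I).cexp

lemma minkFourier_fderiv {f : (Fin 4 → ℝ) → ℝ} (hf : Differentiable ℝ f) (hf_int : Integrable f)
    {v : Fin 4 → ℝ} (hfderiv_int : Integrable fun x => fderiv ℝ f x v) (p : Fin 4 → ℝ) :
    minkFourier (fun x => fderiv ℝ f x v) p = -(I * minkowskiPairing p v) * minkFourier f p := by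
  have hfderiv (x : Fin 4 → ℝ) :
      fderiv ℝ (fun x => (f x : ℂ)) x v = (fderiv ℝ f x v : ℂ) := by
    have h : HasFDerivAt (fun x => (f x : ℂ)) (ofRealCLM.comp (fderiv ℝ f x)) x :=
      ofRealCLM.hasFDerivAt.comp x (hf x).hasFDerivAt
    rw [h.fderiv]
    rfl
  have hwave (x : Fin 4 → ℝ) : fderiv ℝ (fun x => exp (I * minkowskiPairing p x)) x v =
      exp (I * minkowskiPairing p x) * (I * minkowskiPairing p v) := by
    rw [(hasFDerivAt_exp_minkowskiPairing p x).fderiv]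
    rfl
  have hparts := integral_mul_fderiv_eq_neg_fderiv_mul_of_integrable (μ := volume) (v := v)
    (f := fun x => (f x : ℂ)) (g := fun x => exp (I * minkowskiPairing p x))
    (by simpa only [hfderiv] using integrable_mul_wave hfderiv_int p)
    (by simpa only [hwave, mul_assoc] using (integrable_mul_wave hf_int p).mul_const _)
    (integrable_mul_wave hf_int p) (fun x _ => ofRealCLM.differentiableAt.comp x (hf x))
    (fun x _ => (hasFDerivAt_exp_minkowskiPairing p x).differentiableAt)
  simp only [hfderiv, hwave, ← mul_assoc, integral_mul_const] at hparts
  rw [minkFourier, minkFourier, ← neg_eq_iff_eq_neg.2 hparts]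
  ring

lemma exists_abs_pow_mul_norm_minkFourier_le {n : ℕ} {f : (Fin 4 → ℝ) → ℝ} (hf : ContDiff ℝ n f)
    (hfc : HasCompactSupport f) : ∃ C, ∀ p, |p 0| ^ n * ‖minkFourier f p‖ ≤ C := by
  induction n generalizing f with
  | zero => exact ⟨∫ x, ‖f x‖, fun p => by simpa using norm_minkFourier_le f p⟩
  | succ n ih =>
    let e : Fin 4 → ℝ := Pi.single 0 1
    have hderiv : ContDiff ℝ n fun x => fderiv ℝ f x e :=
      (hf.fderiv_right (by norm_cast)).clm_apply contDiff_const
    have hderivc : HasCompactSupport fun x => fderiv ℝ f x e := hfc.fderiv_apply ℝ e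
    obtain ⟨C, hC⟩ := ih hderiv hderivc
    refine ⟨C, fun p => ?_⟩
    have henergy : minkowskiPairing p e = p 0 := by simp [minkowskiPairing, e]
    have h := hC p
    rw [minkFourier_fderiv (hf.differentiable (by simp))
      (hf.continuous.integrable_of_hasCompactSupport hfc)
      (hderiv.continuous.integrable_of_hasCompactSupport hderivc), henergy, norm_mul, norm_neg,
      norm_mul, norm_I, one_mul, norm_real, Real.norm_eq_abs] at h
    rwa [pow_succ, mul_assoc]

lemma integrable_norm_sq_add_sq_rpow {E : Type*} [NormedAddCommGroup E] [NormedSpace ℝ E]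
    [FiniteDimensional ℝ E] [MeasurableSpace E] [BorelSpace E] {μ : Measure E}
    [μ.IsAddHaarMeasure] {m r : ℝ} (hm : m ≠ 0) (hr : Module.finrank ℝ E < r) :
    Integrable (fun p => (‖p‖ ^ 2 + m ^ 2) ^ (-r / 2)) μ := by
  have hscaled := ((integrable_rpow_neg_one_add_norm_sq (μ := μ) hr).comp_smul
    (inv_ne_zero hm)).const_mul ((m ^ 2) ^ (-r / 2))
  refine hscaled.congr (.of_forall fun p => ?_)
  have hfactor : m ^ 2 * (1 + ‖m⁻¹ • p‖ ^ 2) = ‖p‖ ^ 2 + m ^ 2 := by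
    rw [norm_smul, mul_pow, norm_inv, Real.norm_eq_abs, inv_pow, sq_abs]
    field_simp
    ring
  dsimp only
  rw [← Real.mul_rpow (by positivity) (by positivity), hfactor]

lemma integrable_massShellMeasure_of_pow_mul_norm_le {F : Type*} [NormedAddCommGroup F]
    [NormedSpace ℝ F] {m : ℝ} (hm : 0 < m) {n : ℕ} (hn : 2 < n) {φ : (Fin 4 → ℝ) → F}
    (hφ : Continuous φ) {C : ℝ} (hC : ∀ p, |p 0| ^ n * ‖φ p‖ ≤ C) :
    Integrable φ (massShellMeasure m) := by
  have hn' : Module.finrank ℝ (EuclideanSpace ℝ (Fin 3)) < ((n + 1 : ℕ) : ℝ) := by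
    rw [finrank_euclideanSpace_fin]
    exact_mod_cast Nat.succ_lt_succ hn
  have hdecay := (integrable_norm_sq_add_sq_rpow (μ := volume) hm.ne' hn').mul_const (2⁻¹ * C)
  rw [integrable_massShellMeasure_iff]
  refine hdecay.mono' ?_ (.of_forall fun p => ?_)
  · have hdensity : Measurable fun p : EuclideanSpace ℝ (Fin 3) => (2 * √(‖p‖ ^ 2 + m ^ 2))⁻¹ := by
      fun_prop
    exact hdensity.aestronglyMeasurable.smul
      (hφ.comp (continuous_massShellPoint m)).aestronglyMeasurable
  · have hω : 0 < √(‖p‖ ^ 2 + m ^ 2) := by positivity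
    have hle := hC (massShellPoint m p)
    rw [massShellPoint_zero, abs_of_pos hω] at hle
    rw [norm_smul, Real.norm_of_nonneg (by positivity),
      Real.rpow_div_two_eq_sqrt _ (by positivity), Real.rpow_neg hω.le, Real.rpow_natCast]
    generalize √(‖p‖ ^ 2 + m ^ 2) = ω at hω hle ⊢
    calc (2 * ω)⁻¹ * ‖φ (massShellPoint m p)‖
        = (ω ^ (n + 1))⁻¹ * (2⁻¹ * (ω ^ n * ‖φ (massShellPoint m p)‖)) := by
          field_simp
          ring
      _ ≤ (ω ^ (n + 1))⁻¹ * (2⁻¹ * C) := by gcongr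

lemma integrable_conj_minkFourier_mul_minkFourier {m : ℝ} (hm : 0 < m) {n k : ℕ} (hnk : 2 < n + k)
    {f g : (Fin 4 → ℝ) → ℝ} (hf : ContDiff ℝ n f) (hfc : HasCompactSupport f)
    (hg : ContDiff ℝ k g) (hgc : HasCompactSupport g) :
    Integrable (fun p => (starRingEnd ℂ) (minkFourier f p) * minkFourier g p)
      (massShellMeasure m) := by
  obtain ⟨A, hA⟩ := exists_abs_pow_mul_norm_minkFourier_le hf hfc
  obtain ⟨B, hB⟩ := exists_abs_pow_mul_norm_minkFourier_le hg hgc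
  have hf_cont := continuous_minkFourier (hf.continuous.integrable_of_hasCompactSupport hfc)
  have hg_cont := continuous_minkFourier (hg.continuous.integrable_of_hasCompactSupport hgc)
  refine integrable_massShellMeasure_of_pow_mul_norm_le hm hnk
    ((continuous_conj.comp hf_cont).mul hg_cont) (C := A * B) fun p => ?_
  rw [norm_mul, RCLike.norm_conj, pow_add, mul_mul_mul_comm]
  have hA_nonneg : 0 ≤ A := le_trans (by positivity) (hA p)
  gcongr
  exacts [hA p, hB p]

/-! ### Locality -/

lemma tendsto_integral_mul_im_regularizedTwoPoint {m : ℝ} (hm : 0 < m) {f g : (Fin 4 → ℝ) → ℝ}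
    (hf : Integrable f) (hfc : HasCompactSupport f) (hg : Integrable g) (hgc : HasCompactSupport g)
    (hsep : ∀ x ∈ tsupport f, ∀ y ∈ tsupport g, minkowskiQ (x - y) < 0) :
    Tendsto (fun ε => ∫ w : (Fin 4 → ℝ) × (Fin 4 → ℝ),
      (f w.1 * g w.2) * (regularizedTwoPoint m ε (w.2 - w.1)).im) (𝓝[>] 0) (𝓝 0) := by
  let diff (w : (Fin 4 → ℝ) × (Fin 4 → ℝ)) : Fin 4 → ℝ := w.2 - w.1
  have hspacelike : ∀ x ∈ diff '' (tsupport f ×ˢ tsupport g), minkowskiQ x < 0 := by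
    rintro _ ⟨w, ⟨hw₁, hw₂⟩, rfl⟩
    simpa [diff, minkowskiQ, sub_sq_comm] using hsep w.1 hw₁ w.2 hw₂
  have huniform : TendstoUniformlyOn (fun ε w => (regularizedTwoPoint m ε (diff w)).im) 0
      (𝓝[>] 0) (tsupport f ×ˢ tsupport g) :=
    ((tendstoUniformlyOn_im_regularizedTwoPoint hm ((hfc.prod hgc).image (by fun_prop))
      hspacelike).comp diff).mono (subset_preimage_image _ _)
  refine tendsto_integral_mul_zero_of_tendstoUniformlyOn (hf.mul_prod hg) (fun w hw => ?_) huniform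
  rw [mul_eq_zero]
  by_contra! h
  exact hw ⟨subset_tsupport f h.1, subset_tsupport g h.2⟩

theorem integral_fourier_mass_shell_real_of_spacelike_general {m : ℝ} (hm : 0 < m)
    {f g : (Fin 4 → ℝ) → ℝ} (hf : Integrable f) (hfc : HasCompactSupport f) (hg : Integrable g)
    (hgc : HasCompactSupport g)
    (hfg : Integrable (fun p => (starRingEnd ℂ) (minkFourier f p) * minkFourier g p)
      (massShellMeasure m))
    (hsep : ∀ x ∈ tsupport f, ∀ y ∈ tsupport g, minkowskiQ (x - y) < 0) :
    (∫ p, (starRingEnd ℂ) (minkFourier f p) * minkFourier g p ∂massShellMeasure m).im = 0 := by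
  have hcutoff : Tendsto (fun ε => (∫ p, Real.exp (-ε * ‖spatialPart p‖ ^ 2) •
      ((starRingEnd ℂ) (minkFourier f p) * minkFourier g p) ∂massShellMeasure m).im) (𝓝[>] 0)
      (𝓝 (∫ p, (starRingEnd ℂ) (minkFourier f p) * minkFourier g p ∂massShellMeasure m).im) :=
    (continuous_im.tendsto _).comp (tendsto_integral_exp_neg_mul_smul hfg
      (Continuous.aestronglyMeasurable (by fun_prop)) fun p => sq_nonneg _)
  refine tendsto_nhds_unique hcutoff
    ((tendsto_integral_mul_im_regularizedTwoPoint hm hf hfc hg hgc hsep).congr' ?_)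
  filter_upwards [eventually_mem_nhdsWithin] with ε hε
  have hρ := integrable_exp_neg_mul_norm_spatialPart_sq hm hε
  simpa only [regularizedTwoPoint, real_smul] using
    (im_integral_mul_conj_minkFourier_mul_minkFourier hρ hf hg).symm

/-- **locality of the free scalar two-point symplectic form.**  If `f, g`
are smooth compactly supported real test functions on `ℝ⁴` with spacelike separated
supports, then `∫ conj(f̂) ĝ dΩ_m⁺` is real. -/
theorem integral_fourier_mass_shell_real_of_spacelike
    (m : ℝ) (hm : 0 < m)
    (f g : (Fin 4 → ℝ) → ℝ)
    (hf : ContDiff ℝ (⊤ : ℕ∞) f) (hfc : HasCompactSupport f)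
    (hg : ContDiff ℝ (⊤ : ℕ∞) g) (hgc : HasCompactSupport g)
    (hsep : ∀ x ∈ tsupport f, ∀ y ∈ tsupport g, minkowskiQ (x - y) < 0) :
    (∫ p : Fin 4 → ℝ,
        (starRingEnd ℂ) (minkFourier f p) * minkFourier g p ∂(massShellMeasure m)).im
      = 0 := by
  have hfg := integrable_conj_minkFourier_mul_minkFourier hm (by norm_num : 2 < 2 + 2)
    (contDiff_infty.1 hf 2) hfc (contDiff_infty.1 hg 2) hgc
  exact integral_fourier_mass_shell_real_of_spacelike_general hm
    (hf.continuous.integrable_of_hasCompactSupport hfc) hfc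
    (hg.continuous.integrable_of_hasCompactSupport hgc) hgc hfg hsep
end
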